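/- arXiv:1702.06859 — 2 statements merged into one kernel-verified Lean document; each statement's English description precedes it below -/
import Mathlib

section
/- Let T > 0 and let b, b̃, σ, σ̃ belong to the class M with σ(x) > 0 and σ̃(x) > 0 for all x. For k = 1, 2, let u_k be a classical solution of the parabolic equation associated with (b, σ, f_k) and let ũ_k be a classical solution of the parabolic equation associated with (b̃, σ̃, f_k), where f_k(x) = x^k. If there exist ε ∈ (0, T) and a point x₀ ∈ ℝ such that u_k(t,x₀) = ũ_k(t,x₀) and ∂_x u_k(t,x₀) = ∂_x ũ_k(t,x₀) for all t ∈ (0, ε) and k = 1, 2, then b(x) = b̃(x) and σ(x) = σ̃(x) for all x ∈ ℝ. -/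
open Set Filter

/-- A function `ψ : ℝ → ℝ` is piecewise analytic if there exist `δ > 0`, a strictly
increasing sequence `(κ j)_{j ∈ ℤ}` tending to `-∞` at `-∞` and `+∞` at `+∞` with
`κ (j+1) - κ j > δ`, and functions `φ j` analytic on `[κ j, κ (j+1)]`, such that
`ψ = φ j` on `[κ j, κ (j+1))`. -/
def PiecewiseAnalytic (ψ : ℝ → ℝ) : Prop :=
  ∃ (δ : ℝ) (κ : ℤ → ℝ) (φ : ℤ → ℝ → ℝ),
    0 < δ ∧ StrictMono κ ∧
    Tendsto κ atBot atBot ∧ Tendsto κ atTop atTop ∧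
    (∀ j : ℤ, δ < κ (j + 1) - κ j) ∧
    (∀ j : ℤ, AnalyticOn ℝ (φ j) (Icc (κ j) (κ (j + 1)))) ∧
    (∀ j : ℤ, ∀ x ∈ Ico (κ j) (κ (j + 1)), ψ x = φ j x)

/-- The class `M` of Lipschitz-continuous, piecewise analytic functions on `ℝ`. -/
def ClassM (ψ : ℝ → ℝ) : Prop :=
  (∃ K, LipschitzWith K ψ) ∧ PiecewiseAnalytic ψ

/-- `u : [0,T) × ℝ → ℝ` is a classical solution of
`∂ₜ u = (1/2) σ(x)² ∂ₓₓ u + b(x) ∂ₓ u`, `u(0, ·) = f`: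
`u`, `∂ₜ u`, `∂ₓ u`, `∂ₓₓ u` exist and are continuous on `[0,T) × ℝ`, the PDE holds
there, and the initial condition holds. -/
def IsClassicalSolution (T : ℝ) (b σ f : ℝ → ℝ) (u : ℝ → ℝ → ℝ) : Prop :=
  ContinuousOn (fun p : ℝ × ℝ => u p.1 p.2) (Ico 0 T ×ˢ univ) ∧
  (∀ t ∈ Ico 0 T, ∀ x : ℝ, DifferentiableAt ℝ (fun s => u s x) t) ∧
  (∀ t ∈ Ico 0 T, ∀ x : ℝ, DifferentiableAt ℝ (fun y => u t y) x) ∧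
  (∀ t ∈ Ico 0 T, ∀ x : ℝ, DifferentiableAt ℝ (deriv (fun y => u t y)) x) ∧
  ContinuousOn (fun p : ℝ × ℝ => deriv (fun s => u s p.2) p.1) (Ico 0 T ×ˢ univ) ∧
  ContinuousOn (fun p : ℝ × ℝ => deriv (fun y => u p.1 y) p.2) (Ico 0 T ×ˢ univ) ∧
  ContinuousOn (fun p : ℝ × ℝ => deriv (deriv (fun y => u p.1 y)) p.2) (Ico 0 T ×ˢ univ) ∧
  (∀ t ∈ Ico 0 T, ∀ x : ℝ,
    deriv (fun s => u s x) t =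
      (1 / 2) * (σ x) ^ 2 * deriv (deriv (fun y => u t y)) x
        + b x * deriv (fun y => u t y) x) ∧
  (∀ x : ℝ, u 0 x = f x)

/-!
Suppose that the coefficient pairs `(σ² / 2, b)` of the two equations agree on `[x₀, x₁]`. To the
right of `x₁` their difference is either identically zero or of the form `(x - x₁) ^ n • g x` with
`g` analytic and `g x₁ ≠ 0`. Write `L φ = g.1 φ'' + g.2 φ'` and let `u`, `v` be the two solutions
starting from `f`. If `S = L f x₁` were nonzero, then `S (L (v t) x)` would be positive for small
`t` and `x` near `x₁`, so that the source in the equation solved by `S (u - v)` has one sign: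
`S (u - v)` is a supersolution vanishing at `x₀` and at `t = 0`, and it grows linearly in time at a
point `q > x₁`. A parabolic Hopf lemma then makes its flux at `x₀` strictly positive,
contradicting the equality of the observed derivatives. Hence `L f₁` and `L f₂` both vanish at
`x₁`, and since the Wronskian `f₁' f₂'' - f₂' f₁''` has no zero, `g x₁ = 0`, which is absurd. So the
coefficients agree slightly beyond `x₁`, and real induction carries this to all of `[x₀, ∞)`. The
left half-line follows by the reflection `x ↦ -x`, for which piecewise analyticity has to be
supplemented by continuity at the breakpoints; this continuity comes from the equations at `t = 0`.
-/

open scoped Topology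

section OneVariable

variable {φ : ℝ → ℝ} {d x : ℝ}

theorem deriv_nonneg_of_isLocalMinOn_Ici (hmin : IsLocalMinOn φ (Ici x) x)
    (hφ : HasDerivWithinAt φ d (Ici x) x) : 0 ≤ d := by
  have hcone : (1 : ℝ) ∈ posTangentConeAt (Ici x) x :=
    mem_posTangentConeAt_of_segment_subset <|
      (convex_Ici x).segment_subset self_mem_Ici (by simp)
  simpa using hmin.hasFDerivWithinAt_nonneg hφ.hasFDerivWithinAt hcone

theorem deriv_nonpos_of_isLocalMinOn_Iic (hmin : IsLocalMinOn φ (Iic x) x)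
    (hφ : HasDerivWithinAt φ d (Iic x) x) : d ≤ 0 := by
  have hcone : (-1 : ℝ) ∈ posTangentConeAt (Iic x) x :=
    mem_posTangentConeAt_of_segment_subset <|
      (convex_Iic x).segment_subset self_mem_Iic (by simp)
  simpa using hmin.hasFDerivWithinAt_nonneg hφ.hasFDerivWithinAt hcone

theorem deriv_deriv_nonneg_of_isLocalMin (hmin : IsLocalMin φ x) (hφ : ContinuousAt φ x) :
    0 ≤ deriv (deriv φ) x := by
  by_contra! hneg
  have hmax : IsLocalMax φ x := isLocalMax_of_deriv_deriv_neg hneg hmin.deriv_eq_zero hφ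
  have hconst : φ =ᶠ[𝓝 x] fun _ ↦ φ x := by
    filter_upwards [hmin, hmax] with y hle hge using le_antisymm hge hle
  have hzero : deriv (deriv φ) x = 0 := by simpa using hconst.deriv.deriv_eq
  exact hneg.ne hzero

theorem eventually_add_mul_sub_le_of_hasDerivWithinAt {c : ℝ} (hφ : HasDerivWithinAt φ d (Ici x) x)
    (hc : c < d) : ∀ᶠ y in 𝓝[>] x, φ x + c * (y - x) ≤ φ y := by
  have hslope : Tendsto (slope φ x) (𝓝[>] x) (𝓝 d) :=
    (hasDerivWithinAt_iff_tendsto_slope' self_notMem_Ioi).1 hφ.Ioi_of_Ici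
  filter_upwards [hslope.eventually_const_lt hc, self_mem_nhdsWithin] with y hy hxy
  rw [slope_def_field, lt_div_iff₀ (sub_pos.2 hxy)] at hy
  linarith

end OneVariable

theorem exists_pos_forall_le_mul_add_of_isCompact {X : Type*} [TopologicalSpace X] {s : Set X}
    (hs : IsCompact s) {a β : X → ℝ} (ha : ContinuousOn a s) (hβ : ContinuousOn β s)
    (hpos : ∀ x ∈ s, 0 < a x) (K : ℝ) : ∃ l > 0, ∀ x ∈ s, K ≤ a x * l + β x := by
  obtain ⟨M, hM⟩ := hs.bddAbove_image
    ((continuousOn_const.sub hβ).div ha fun x hx ↦ (hpos x hx).ne' :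
      ContinuousOn (fun x ↦ (K - β x) / a x) s)
  refine ⟨max M 1, by positivity, fun x hx ↦ ?_⟩
  have hle : (K - β x) / a x ≤ max M 1 := (hM (mem_image_of_mem _ hx)).trans (le_max_left _ _)
  rw [div_le_iff₀ (hpos x hx)] at hle
  linarith

theorem forall_ge_of_forall_eventually_nhdsGE {α : Type*} [ConditionallyCompleteLinearOrder α]
    [TopologicalSpace α] [OrderTopology α] [NoMaxOrder α] {p : α → Prop} {a : α}
    (h : ∀ c ≥ a, (∀ x ∈ Ico a c, p x) → ∀ᶠ x in 𝓝[≥] c, p x) : ∀ x ≥ a, p x := by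
  by_contra! hcon
  let s : Set α := {x | a ≤ x ∧ ¬ p x}
  have hne : s.Nonempty := hcon
  have hbdd : BddBelow s := ⟨a, fun _ hx ↦ hx.1⟩
  have hbelow : ∀ x ∈ Ico a (sInf s), p x := fun x hx ↦
    not_not.1 fun hpx ↦ notMem_of_lt_csInf hx.2 hbdd ⟨hx.1, hpx⟩
  obtain ⟨d, hd, hIco⟩ := mem_nhdsGE_iff_exists_Ico_subset.1 <|
    h (sInf s) (le_csInf hne fun _ hx ↦ hx.1) hbelow
  obtain ⟨y, hys, hyd⟩ := exists_lt_of_csInf_lt hne hd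
  exact hys.2 (hIco ⟨csInf_le hbdd hys, hyd⟩)

/-- The operator `φ ↦ a φ'' + β φ'` with coefficient pair `γ = (a, β)`. -/
noncomputable def diffusionOp (γ : ℝ → ℝ × ℝ) (φ : ℝ → ℝ) (x : ℝ) : ℝ :=
  (γ x).1 * deriv (deriv φ) x + (γ x).2 * deriv φ x

/-- The coefficient pair `(σ² / 2, b)` of the generator of a diffusion with drift `b` and
volatility `σ`. -/
noncomputable def diffusionCoeff (b σ : ℝ → ℝ) (x : ℝ) : ℝ × ℝ := (1 / 2 * σ x ^ 2, b x)

section DiffusionOp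

variable {γ γ' : ℝ → ℝ × ℝ} {φ ψ : ℝ → ℝ} {x : ℝ}

theorem diffusionOp_coeff_sub :
    diffusionOp (γ - γ') φ x = diffusionOp γ φ x - diffusionOp γ' φ x := by
  simp only [diffusionOp, Pi.sub_apply, Prod.fst_sub, Prod.snd_sub]
  ring

theorem diffusionOp_of_coeff_eq_smul {c : ℝ} (h : γ x = c • γ' x) :
    diffusionOp γ φ x = c * diffusionOp γ' φ x := by
  simp only [diffusionOp, h, Prod.smul_fst, Prod.smul_snd, smul_eq_mul]
  ring

theorem diffusionOp_const_mul (c : ℝ) :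
    diffusionOp γ (fun y ↦ c * φ y) x = c * diffusionOp γ φ x := by
  simp only [diffusionOp, deriv_const_mul_field']
  ring

theorem diffusionOp_sub (hφ : ∀ᶠ y in 𝓝 x, DifferentiableAt ℝ φ y)
    (hψ : ∀ᶠ y in 𝓝 x, DifferentiableAt ℝ ψ y) (hφ' : DifferentiableAt ℝ (deriv φ) x)
    (hψ' : DifferentiableAt ℝ (deriv ψ) x) :
    diffusionOp γ (fun y ↦ φ y - ψ y) x = diffusionOp γ φ x - diffusionOp γ ψ x := by
  have hderiv : deriv (fun y ↦ φ y - ψ y) =ᶠ[𝓝 x] fun y ↦ deriv φ y - deriv ψ y := by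
    filter_upwards [hφ, hψ] with y hφy hψy using deriv_fun_sub hφy hψy
  simp only [diffusionOp, hderiv.deriv_eq, hderiv.eq_of_nhds, deriv_fun_sub hφ' hψ']
  ring

theorem diffusionOp_nonneg_of_isLocalMin (hγ : 0 ≤ (γ x).1) (hmin : IsLocalMin φ x)
    (hφ : ContinuousAt φ x) : 0 ≤ diffusionOp γ φ x := by
  rw [diffusionOp, hmin.deriv_eq_zero, mul_zero, add_zero]
  exact mul_nonneg hγ (deriv_deriv_nonneg_of_isLocalMin hmin hφ)

theorem coeff_eq_zero_of_diffusionOp_eq_zero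
    (hW : deriv φ x * deriv (deriv ψ) x ≠ deriv ψ x * deriv (deriv φ) x)
    (hφ : diffusionOp γ φ x = 0) (hψ : diffusionOp γ ψ x = 0) : γ x = 0 := by
  have hdet := sub_ne_zero.2 hW
  simp only [diffusionOp] at hφ hψ
  have hfst : (γ x).1 = 0 := by
    refine (mul_eq_zero.1 ?_).resolve_left hdet
    linear_combination deriv φ x * hψ - deriv ψ x * hφ
  have hsnd : (γ x).2 = 0 := by
    refine (mul_eq_zero.1 ?_).resolve_left hdet
    linear_combination deriv (deriv ψ) x * hφ - deriv (deriv φ) x * hψ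
  exact Prod.ext hfst hsnd

theorem continuous_coeff_of_continuous_diffusionOp
    (hW : ∀ x, deriv φ x * deriv (deriv ψ) x ≠ deriv ψ x * deriv (deriv φ) x)
    (hφ' : Continuous (deriv φ)) (hφ'' : Continuous (deriv (deriv φ)))
    (hψ' : Continuous (deriv ψ)) (hψ'' : Continuous (deriv (deriv ψ)))
    (hφ : Continuous (diffusionOp γ φ)) (hψ : Continuous (diffusionOp γ ψ)) : Continuous γ := by
  have hdet := fun x ↦ sub_ne_zero.2 (hW x)
  have hcramer : γ = fun x ↦
      ((deriv φ x * diffusionOp γ ψ x - deriv ψ x * diffusionOp γ φ x) /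
          (deriv φ x * deriv (deriv ψ) x - deriv ψ x * deriv (deriv φ) x),
        (deriv (deriv ψ) x * diffusionOp γ φ x - deriv (deriv φ) x * diffusionOp γ ψ x) /
          (deriv φ x * deriv (deriv ψ) x - deriv ψ x * deriv (deriv φ) x)) := by
    funext x
    refine Prod.ext ?_ ?_ <;> rw [eq_div_iff (hdet x)] <;> simp only [diffusionOp] <;> ring
  rw [hcramer]
  exact (((hφ'.mul hψ).sub (hψ'.mul hφ)).div (by fun_prop) hdet).prodMk
    (((hψ''.mul hφ).sub (hφ''.mul hψ)).div (by fun_prop) hdet)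

end DiffusionOp

section DiffusionCoeff

variable {b b' σ σ' : ℝ → ℝ} {x : ℝ}

theorem eq_of_diffusionCoeff_eq (hσ : 0 ≤ σ x) (hσ' : 0 ≤ σ' x)
    (h : diffusionCoeff b σ x = diffusionCoeff b' σ' x) : b x = b' x ∧ σ x = σ' x := by
  obtain ⟨hsq, hb⟩ := Prod.mk.inj h
  exact ⟨hb, (pow_left_inj₀ hσ hσ' two_ne_zero).1 (by linarith)⟩

theorem continuous_of_continuous_diffusionCoeff (hσ : ∀ x, 0 ≤ σ x)
    (h : Continuous (diffusionCoeff b σ)) : Continuous b ∧ Continuous σ := by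
  have hsqrt : ∀ x, √(2 * (diffusionCoeff b σ x).1) = σ x := by
    intro x
    rw [diffusionCoeff, ← mul_assoc, mul_one_div_cancel two_ne_zero, one_mul, Real.sqrt_sq (hσ x)]
  exact ⟨h.snd, (continuous_const.mul h.fst).sqrt.congr hsqrt⟩

theorem analyticWithinAt_diffusionCoeff {s : Set ℝ} (hb : AnalyticWithinAt ℝ b s x)
    (hσ : AnalyticWithinAt ℝ σ s x) : AnalyticWithinAt ℝ (diffusionCoeff b σ) s x :=
  (analyticWithinAt_const.mul (hσ.pow 2)).prod hb

end DiffusionCoeff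

/-! ### The maximum principle for supersolutions -/

/-- `w` is a supersolution of `∂ₜ w = a ∂ₓₓ w + β ∂ₓ w`, `γ = (a, β)`, on the rectangle
`[0, τ] × [p, q]`. The inequality is only required off the parabolic boundary. -/
structure IsSupersolution (γ : ℝ → ℝ × ℝ) (τ p q : ℝ) (w : ℝ → ℝ → ℝ) : Prop where
  continuousOn : ContinuousOn (fun z : ℝ × ℝ ↦ w z.1 z.2) (Icc 0 τ ×ˢ Icc p q)
  differentiableAt_time : ∀ t ∈ Ioc 0 τ, ∀ x ∈ Ioo p q, DifferentiableAt ℝ (fun s ↦ w s x) t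
  differentiableAt_space : ∀ t ∈ Ioc 0 τ, ∀ x ∈ Ioo p q, DifferentiableAt ℝ (w t) x
  differentiableAt_deriv_space :
    ∀ t ∈ Ioc 0 τ, ∀ x ∈ Ioo p q, DifferentiableAt ℝ (deriv (w t)) x
  diffusionOp_le : ∀ t ∈ Ioc 0 τ, ∀ x ∈ Ioo p q,
    diffusionOp γ (w t) x ≤ deriv (fun s ↦ w s x) t

namespace IsSupersolution

variable {γ : ℝ → ℝ × ℝ} {τ p q : ℝ} {w : ℝ → ℝ → ℝ}

theorem mono {τ' : ℝ} (hw : IsSupersolution γ τ p q w) (hτ : τ' ≤ τ) :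
    IsSupersolution γ τ' p q w := by
  have hsub : Ioc 0 τ' ⊆ Ioc 0 τ := Ioc_subset_Ioc_right hτ
  exact
    { continuousOn := hw.continuousOn.mono (prod_mono (Icc_subset_Icc_right hτ) subset_rfl)
      differentiableAt_time := fun t ht ↦ hw.differentiableAt_time t (hsub ht)
      differentiableAt_space := fun t ht ↦ hw.differentiableAt_space t (hsub ht)
      differentiableAt_deriv_space := fun t ht ↦ hw.differentiableAt_deriv_space t (hsub ht)
      diffusionOp_le := fun t ht ↦ hw.diffusionOp_le t (hsub ht) }

theorem deriv_time_nonneg_of_isMinOn (hw : IsSupersolution γ τ p q w)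
    (hγ : ∀ x ∈ Ioo p q, 0 ≤ (γ x).1) {t x : ℝ} (ht : t ∈ Ioc 0 τ) (hx : x ∈ Ioo p q)
    (hmin : IsMinOn (w t) (Icc p q) x) : 0 ≤ deriv (fun s ↦ w s x) t :=
  (diffusionOp_nonneg_of_isLocalMin (hγ x hx) (hmin.isLocalMin (Icc_mem_nhds hx.1 hx.2))
    (hw.differentiableAt_space t ht x hx).continuousAt).trans (hw.diffusionOp_le t ht x hx)

theorem nonneg (hw : IsSupersolution γ τ p q w) (hγ : ∀ x ∈ Ioo p q, 0 ≤ (γ x).1)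
    (hinit : ∀ x ∈ Icc p q, 0 ≤ w 0 x) (hleft : ∀ t ∈ Icc 0 τ, 0 ≤ w t p)
    (hright : ∀ t ∈ Icc 0 τ, 0 ≤ w t q) {t x : ℝ} (ht : t ∈ Icc 0 τ) (hx : x ∈ Icc p q) :
    0 ≤ w t x := by
  suffices hδ : ∀ δ > 0, 0 ≤ w t x + δ * t by
    have hlim : Tendsto (fun δ ↦ w t x + δ * t) (𝓝[>] 0) (𝓝 (w t x)) :=
      (Continuous.tendsto' (by fun_prop) 0 (w t x) (by simp)).mono_left nhdsWithin_le_nhds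
    exact ge_of_tendsto hlim (eventually_nhdsWithin_of_forall hδ)
  intro δ hδ
  obtain ⟨⟨s, y⟩, ⟨hs, hy⟩, hmin⟩ :=
    (isCompact_Icc.prod isCompact_Icc).exists_isMinOn ⟨(t, x), ht, hx⟩
      (hw.continuousOn.add (by fun_prop : ContinuousOn (fun z : ℝ × ℝ ↦ δ * z.1) _))
  have hle : ∀ s' ∈ Icc 0 τ, ∀ y' ∈ Icc p q, w s y + δ * s ≤ w s' y' + δ * s' :=
    fun s' hs' y' hy' ↦ hmin (mk_mem_prod hs' hy')
  refine le_trans ?_ (hle t ht x hx)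
  have hδs : 0 ≤ δ * s := mul_nonneg hδ.le hs.1
  rcases hs.1.eq_or_lt with rfl | hs0
  · exact add_nonneg (hinit y hy) hδs
  rcases hy.1.eq_or_lt with rfl | hpy
  · exact add_nonneg (hleft s hs) hδs
  rcases hy.2.eq_or_lt with rfl | hyq
  · exact add_nonneg (hright s hs) hδs
  have hspace : 0 ≤ deriv (fun s ↦ w s y) s :=
    hw.deriv_time_nonneg_of_isMinOn hγ ⟨hs0, hs.2⟩ ⟨hpy, hyq⟩
      fun y' hy' ↦ (add_le_add_iff_right (δ * s)).1 (hle s hs y' hy')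
  have htime : deriv (fun s ↦ w s y) s + δ ≤ 0 := by
    refine deriv_nonpos_of_isLocalMinOn_Iic (φ := fun s ↦ w s y + δ * s) (x := s) ?_ ?_
    · filter_upwards [Icc_mem_nhdsLE hs0] with s' hs'
      exact hle s' ⟨hs'.1, hs'.2.trans hs.2⟩ y hy
    · simpa using ((hw.differentiableAt_time s ⟨hs0, hs.2⟩ y ⟨hpy, hyq⟩).hasDerivAt.fun_add
        ((hasDerivAt_id s).const_mul δ)).hasDerivWithinAt
  linarith

end IsSupersolution

/-! ### The Hopf lemma at a lateral boundary point -/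

/-- The increasing wave `exp (l (x - q + K t)) - 1`, whose zero travels to the left from `q` with
speed `K`. For large `l` it is a subsolution, used as the barrier in the Hopf lemma. -/
noncomputable def travellingWave (l K q t x : ℝ) : ℝ := Real.exp (l * (x - q + K * t)) - 1

section TravellingWave

variable {γ : ℝ → ℝ × ℝ} {l K q t x : ℝ}

theorem hasDerivAt_travellingWave_time :
    HasDerivAt (fun s ↦ travellingWave l K q s x) (l * K * Real.exp (l * (x - q + K * t))) t := by
  have h := (((hasDerivAt_id t).const_mul K).const_add (x - q)).const_mul l
  exact (h.exp.sub_const 1).congr_deriv (by simp only [id, mul_one]; ring)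

theorem hasDerivAt_travellingWave_space :
    HasDerivAt (travellingWave l K q t) (l * Real.exp (l * (x - q + K * t))) x := by
  have h := (((hasDerivAt_id x).sub_const q).add_const (K * t)).const_mul l
  exact (h.exp.sub_const 1).congr_deriv (by simp only [id, mul_one]; ring)

theorem deriv_travellingWave_space :
    deriv (travellingWave l K q t) = fun x ↦ l * (travellingWave l K q t x + 1) := by
  funext x
  rw [hasDerivAt_travellingWave_space.deriv, travellingWave, sub_add_cancel]

theorem hasDerivAt_deriv_travellingWave_space :
    HasDerivAt (deriv (travellingWave l K q t)) (l * (l * Real.exp (l * (x - q + K * t)))) x := by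
  rw [deriv_travellingWave_space]
  exact (hasDerivAt_travellingWave_space.add_const 1).const_mul l

theorem deriv_time_travellingWave_le_diffusionOp (hl : 0 ≤ l)
    (hK : K ≤ (γ x).1 * l + (γ x).2) :
    deriv (fun s ↦ travellingWave l K q s x) t ≤ diffusionOp γ (travellingWave l K q t) x := by
  rw [hasDerivAt_travellingWave_time.deriv, diffusionOp,
    hasDerivAt_deriv_travellingWave_space.deriv, hasDerivAt_travellingWave_space.deriv]
  calc l * K * Real.exp (l * (x - q + K * t))
      ≤ l * ((γ x).1 * l + (γ x).2) * Real.exp (l * (x - q + K * t)) := by gcongr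
    _ = _ := by ring

theorem travellingWave_nonpos (hl : 0 ≤ l) (hx : x - q + K * t ≤ 0) :
    travellingWave l K q t x ≤ 0 :=
  sub_nonpos.2 (Real.exp_le_one_iff.2 (mul_nonpos_of_nonneg_of_nonpos hl hx))

theorem travellingWave_self_le : travellingWave l K q t q ≤ l * K * t * Real.exp (l * K * t) := by
  have hexp := mul_le_mul_of_nonneg_right (Real.add_one_le_exp (-(l * K * t)))
    (Real.exp_pos (l * K * t)).le
  rw [← Real.exp_add, neg_add_cancel, Real.exp_zero] at hexp
  rw [travellingWave, sub_self, zero_add, ← mul_assoc]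
  linarith

end TravellingWave

namespace IsSupersolution

variable {γ : ℝ → ℝ × ℝ} {τ p q : ℝ} {w : ℝ → ℝ → ℝ}

theorem sub_travellingWave {l K η : ℝ} (hw : IsSupersolution γ τ p q w) (hη : 0 ≤ η)
    (hl : 0 ≤ l) (hK : ∀ x ∈ Ioo p q, K ≤ (γ x).1 * l + (γ x).2) :
    IsSupersolution γ τ p q fun t x ↦ w t x - η * travellingWave l K q t x := by
  have hspace : ∀ t x, DifferentiableAt ℝ (fun y ↦ η * travellingWave l K q t y) x :=
    fun t x ↦ hasDerivAt_travellingWave_space.differentiableAt.const_mul η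
  have hderiv : ∀ t x, DifferentiableAt ℝ (deriv fun y ↦ η * travellingWave l K q t y) x := by
    intro t x
    rw [deriv_const_mul_field']
    exact hasDerivAt_deriv_travellingWave_space.differentiableAt.const_mul η
  have hnhds : ∀ t ∈ Ioc 0 τ, ∀ x ∈ Ioo p q, ∀ᶠ y in 𝓝 x, DifferentiableAt ℝ (w t) y :=
    fun t ht x hx ↦ by
      filter_upwards [Ioo_mem_nhds hx.1 hx.2] with y hy using hw.differentiableAt_space t ht y hy
  refine ⟨hw.continuousOn.sub ?_, fun t ht x hx ↦ ?_, fun t ht x hx ↦ ?_, fun t ht x hx ↦ ?_,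
    fun t ht x hx ↦ ?_⟩
  · unfold travellingWave
    fun_prop
  · exact (hw.differentiableAt_time t ht x hx).sub
      (hasDerivAt_travellingWave_time.differentiableAt.const_mul η)
  · exact (hw.differentiableAt_space t ht x hx).sub (hspace t x)
  · have heq : deriv (fun y ↦ w t y - η * travellingWave l K q t y) =ᶠ[𝓝 x]
        deriv (w t) - deriv fun y ↦ η * travellingWave l K q t y := by
      filter_upwards [hnhds t ht x hx] with y hy using deriv_fun_sub hy (hspace t y)
    exact heq.differentiableAt_iff.2
      ((hw.differentiableAt_deriv_space t ht x hx).sub (hderiv t x))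
  · rw [diffusionOp_sub (hnhds t ht x hx) (.of_forall (hspace t))
        (hw.differentiableAt_deriv_space t ht x hx) (hderiv t x), diffusionOp_const_mul,
      deriv_fun_sub (hw.differentiableAt_time t ht x hx)
        (hasDerivAt_travellingWave_time.differentiableAt.const_mul η), deriv_const_mul_field']
    exact sub_le_sub (hw.diffusionOp_le t ht x hx)
      (mul_le_mul_of_nonneg_left (deriv_time_travellingWave_le_diffusionOp hl (hK x hx)) hη)

theorem travellingWave_le {l K η : ℝ} (hw : IsSupersolution γ τ p q w)
    (hγ : ∀ x ∈ Ioo p q, 0 ≤ (γ x).1) (hinit : ∀ x ∈ Icc p q, 0 ≤ w 0 x)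
    (hleft : ∀ t ∈ Icc 0 τ, 0 ≤ w t p) (hη : 0 ≤ η) (hl : 0 ≤ l)
    (hK : ∀ x ∈ Ioo p q, K ≤ (γ x).1 * l + (γ x).2) (hfront : ∀ t ∈ Icc 0 τ, K * t ≤ q - p)
    (hright : ∀ t ∈ Icc 0 τ, η * travellingWave l K q t q ≤ w t q) {t x : ℝ} (ht : t ∈ Icc 0 τ)
    (hx : x ∈ Icc p q) : η * travellingWave l K q t x ≤ w t x := by
  have hwave : ∀ s y, y - q + K * s ≤ 0 → η * travellingWave l K q s y ≤ 0 := fun s y hsy ↦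
    mul_nonpos_of_nonneg_of_nonpos hη (travellingWave_nonpos hl hsy)
  refine sub_nonneg.1 <| (hw.sub_travellingWave hη hl hK).nonneg hγ (fun y hy ↦ ?_)
    (fun s hs ↦ ?_) (fun s hs ↦ sub_nonneg.2 (hright s hs)) ht hx
  · exact sub_nonneg.2 ((hwave 0 y (by linarith [hy.2])).trans (hinit y hy))
  · exact sub_nonneg.2 ((hwave s p (by linarith [hfront s hs])).trans (hleft s hs))

theorem deriv_pos_of_lateral_min {c d : ℝ} (hw : IsSupersolution γ τ p q w) (hτ : 0 < τ)
    (hpq : p < q) (hγ : ContinuousOn γ (Icc p q)) (hpos : ∀ x ∈ Icc p q, 0 < (γ x).1)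
    (hinit : ∀ x ∈ Icc p q, 0 ≤ w 0 x) (hleft : ∀ t ∈ Icc 0 τ, 0 ≤ w t p) (hc : 0 < c)
    (hright : ∀ t ∈ Icc 0 τ, c * t ≤ w t q) (hmin : w τ p = 0)
    (hd : HasDerivWithinAt (w τ) d (Ici p) p) : 0 < d := by
  -- The speed `K` makes the front of the wave reach `p` exactly at time `τ`.
  let K : ℝ := (q - p) / τ
  have hK : 0 < K := div_pos (sub_pos.2 hpq) hτ
  have hKτ : K * τ = q - p := div_mul_cancel₀ _ hτ.ne'
  have hfront : ∀ t ∈ Icc 0 τ, K * t ≤ q - p := fun t ht ↦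
    hKτ ▸ mul_le_mul_of_nonneg_left ht.2 hK.le
  obtain ⟨l, hl, hlK⟩ :=
    exists_pos_forall_le_mul_add_of_isCompact isCompact_Icc hγ.fst hγ.snd hpos K
  let η : ℝ := c / (l * K * Real.exp (l * (q - p)))
  have hη : 0 < η := by positivity
  have hηc : η * (l * K * Real.exp (l * (q - p))) = c := div_mul_cancel₀ _ (by positivity)
  have hwave_right : ∀ t ∈ Icc 0 τ, η * travellingWave l K q t q ≤ w t q := fun t ht ↦ by
    have ht0 : 0 ≤ t := ht.1
    calc η * travellingWave l K q t q
        ≤ η * (l * K * t * Real.exp (l * K * t)) := by gcongr; exact travellingWave_self_le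
      _ ≤ η * (l * K * t * Real.exp (l * (q - p))) := by
          rw [mul_assoc l K t]
          gcongr
          exact hfront t ht
      _ = c * t := by rw [← hηc]; ring
      _ ≤ w t q := hright t ht
  have hwave_le : ∀ x ∈ Icc p q, η * travellingWave l K q τ x ≤ w τ x := fun x hx ↦
    hw.travellingWave_le (fun x hx ↦ (hpos x (Ioo_subset_Icc_self hx)).le) hinit hleft hη.le hl.le
      (fun x hx ↦ hlK x (Ioo_subset_Icc_self hx)) hfront hwave_right (right_mem_Icc.2 hτ.le) hx
  have hslope : 0 ≤ d - η * (l * Real.exp (l * (p - q + K * τ))) := by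
    refine deriv_nonneg_of_isLocalMinOn_Ici ?_
      (hd.sub (hasDerivAt_travellingWave_space.const_mul η).hasDerivWithinAt)
    filter_upwards [Icc_mem_nhdsGE hpq] with x hx
    have hwave_zero : travellingWave l K q τ p = 0 := by simp [travellingWave, hKτ]
    simpa [hwave_zero, hmin] using hwave_le x hx
  have hη_slope : 0 < η * (l * Real.exp (l * (p - q + K * τ))) := by positivity
  linarith

theorem eventually_deriv_pos {c : ℝ} (hw : IsSupersolution γ τ p q w) (hτ : 0 < τ) (hpq : p < q)
    (hγ : ContinuousOn γ (Icc p q)) (hpos : ∀ x ∈ Icc p q, 0 < (γ x).1)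
    (hinit : ∀ x ∈ Icc p q, w 0 x = 0) (hleft : ∀ᶠ t in 𝓝[>] 0, w t p = 0) (hc : 0 < c)
    (hright : HasDerivWithinAt (fun t ↦ w t q) c (Ici 0) 0) :
    ∀ᶠ t in 𝓝[>] 0, ∀ d, HasDerivWithinAt (w t) d (Ici p) p → 0 < d := by
  have hgrowth : ∀ᶠ t in 𝓝[>] 0, c / 2 * t ≤ w t q := by
    simpa [hinit q (right_mem_Icc.2 hpq.le)] using
      eventually_add_mul_sub_le_of_hasDerivWithinAt hright (half_lt_self hc)
  obtain ⟨τ', hτ' : 0 < τ', hτ'_sub⟩ :=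
    mem_nhdsGT_iff_exists_Ioo_subset.1 (hleft.and hgrowth)
  filter_upwards [Ioo_mem_nhdsGT (lt_min hτ hτ')] with t ht d hd
  have hlate : ∀ s ∈ Ioc 0 t, w s p = 0 ∧ c / 2 * s ≤ w s q := fun s hs ↦
    hτ'_sub ⟨hs.1, hs.2.trans_lt (ht.2.trans_le (min_le_right _ _))⟩
  have hleft' : ∀ s ∈ Icc 0 t, 0 ≤ w s p := fun s hs ↦ by
    rcases hs.1.eq_or_lt with rfl | h0s
    · exact (hinit p (left_mem_Icc.2 hpq.le)).ge
    · exact (hlate s ⟨h0s, hs.2⟩).1.ge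
  have hright' : ∀ s ∈ Icc 0 t, c / 2 * s ≤ w s q := fun s hs ↦ by
    rcases hs.1.eq_or_lt with rfl | h0s
    · rw [mul_zero, hinit q (right_mem_Icc.2 hpq.le)]
    · exact (hlate s ⟨h0s, hs.2⟩).2
  exact (hw.mono (ht.2.le.trans (min_le_left _ _))).deriv_pos_of_lateral_min ht.1 hpq hγ hpos
    (fun x hx ↦ (hinit x hx).ge) hleft' (half_pos hc) hright' (hlate t ⟨ht.1, le_rfl⟩).1 hd

end IsSupersolution

/-! ### Comparison of two classical solutions -/

/-- The solutions `u` and `v` are indistinguishable at `x₀` for small times: their values at `x₀`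
agree for all small `t > 0`, and their spatial derivatives at `x₀` agree for arbitrarily small
`t > 0`. -/
def LateralDataAgree (u v : ℝ → ℝ → ℝ) (x₀ : ℝ) : Prop :=
  (∀ᶠ t in 𝓝[>] 0, u t x₀ = v t x₀) ∧ ∃ᶠ t in 𝓝[>] 0, deriv (u t) x₀ = deriv (v t) x₀

theorem LateralDataAgree.of_forall_Ioo {u v : ℝ → ℝ → ℝ} {ε x₀ : ℝ} (hε : 0 < ε)
    (huv : ∀ t ∈ Ioo 0 ε, u t x₀ = v t x₀)
    (hderiv : ∀ t ∈ Ioo 0 ε, deriv (u t) x₀ = deriv (v t) x₀) : LateralDataAgree u v x₀ := by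
  have hnhds : Ioo 0 ε ∈ 𝓝[>] (0 : ℝ) := Ioo_mem_nhdsGT hε
  exact ⟨by filter_upwards [hnhds] with t ht using huv t ht,
    Eventually.frequently (by filter_upwards [hnhds] with t ht using hderiv t ht)⟩

namespace IsClassicalSolution

variable {T t x : ℝ} {b σ f : ℝ → ℝ} {u : ℝ → ℝ → ℝ}

theorem continuousOn (hu : IsClassicalSolution T b σ f u) :
    ContinuousOn (fun z : ℝ × ℝ ↦ u z.1 z.2) (Ico 0 T ×ˢ univ) :=
  hu.1

theorem differentiableAt_time (hu : IsClassicalSolution T b σ f u) (ht : t ∈ Ico 0 T) (x : ℝ) :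
    DifferentiableAt ℝ (fun s ↦ u s x) t :=
  hu.2.1 t ht x

theorem differentiable_space (hu : IsClassicalSolution T b σ f u) (ht : t ∈ Ico 0 T) :
    Differentiable ℝ (u t) :=
  hu.2.2.1 t ht

theorem differentiable_deriv_space (hu : IsClassicalSolution T b σ f u) (ht : t ∈ Ico 0 T) :
    Differentiable ℝ (deriv (u t)) :=
  hu.2.2.2.1 t ht

theorem continuousOn_deriv_time (hu : IsClassicalSolution T b σ f u) :
    ContinuousOn (fun z : ℝ × ℝ ↦ deriv (fun s ↦ u s z.2) z.1) (Ico 0 T ×ˢ univ) :=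
  hu.2.2.2.2.1

theorem continuousOn_deriv_space (hu : IsClassicalSolution T b σ f u) :
    ContinuousOn (fun z : ℝ × ℝ ↦ deriv (u z.1) z.2) (Ico 0 T ×ˢ univ) :=
  hu.2.2.2.2.2.1

theorem continuousOn_deriv_deriv_space (hu : IsClassicalSolution T b σ f u) :
    ContinuousOn (fun z : ℝ × ℝ ↦ deriv (deriv (u z.1)) z.2) (Ico 0 T ×ˢ univ) :=
  hu.2.2.2.2.2.2.1

theorem deriv_time_eq (hu : IsClassicalSolution T b σ f u) (ht : t ∈ Ico 0 T) (x : ℝ) :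
    deriv (fun s ↦ u s x) t = diffusionOp (diffusionCoeff b σ) (u t) x :=
  hu.2.2.2.2.2.2.2.1 t ht x

theorem initial_eq (hu : IsClassicalSolution T b σ f u) : u 0 = f :=
  funext hu.2.2.2.2.2.2.2.2

end IsClassicalSolution

section Comparison

variable {T : ℝ} {b b' σ σ' f : ℝ → ℝ} {u v : ℝ → ℝ → ℝ}

theorem IsClassicalSolution.continuousWithinAt_diffusionOp {γ : ℝ → ℝ × ℝ} {x : ℝ} (hT : 0 < T)
    (hu : IsClassicalSolution T b σ f u) (hγ : ContinuousAt γ x) :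
    ContinuousWithinAt (fun z : ℝ × ℝ ↦ diffusionOp γ (u z.1) z.2) (Ico 0 T ×ˢ univ) (0, x) := by
  have hmem : ((0 : ℝ), x) ∈ Ico 0 T ×ˢ (univ : Set ℝ) := ⟨left_mem_Ico.2 hT, mem_univ x⟩
  have hγ' : ContinuousAt (fun z : ℝ × ℝ ↦ γ z.2) (0, x) :=
    ContinuousAt.comp (f := Prod.snd) hγ continuousAt_snd
  exact (hγ'.fst.continuousWithinAt.mul (hu.continuousOn_deriv_deriv_space _ hmem)).add
    (hγ'.snd.continuousWithinAt.mul (hu.continuousOn_deriv_space _ hmem))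

theorem IsClassicalSolution.continuous_diffusionCoeff {f₁ f₂ : ℝ → ℝ} {u₁ u₂ : ℝ → ℝ → ℝ}
    (hT : 0 < T) (hW : ∀ x, deriv f₁ x * deriv (deriv f₂) x ≠ deriv f₂ x * deriv (deriv f₁) x)
    (hu₁ : IsClassicalSolution T b σ f₁ u₁) (hu₂ : IsClassicalSolution T b σ f₂ u₂) :
    Continuous (diffusionCoeff b σ) := by
  have hslice : ∀ {F : ℝ × ℝ → ℝ}, ContinuousOn F (Ico 0 T ×ˢ univ) →
      Continuous fun x ↦ F (0, x) := fun hF ↦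
    hF.comp_continuous (by fun_prop) fun x ↦ ⟨left_mem_Ico.2 hT, mem_univ x⟩
  have hop : ∀ {f u}, IsClassicalSolution T b σ f u →
      Continuous (diffusionOp (diffusionCoeff b σ) f) := fun {f u} hu ↦
    (hslice hu.continuousOn_deriv_time).congr fun x ↦ by
      rw [hu.deriv_time_eq (left_mem_Ico.2 hT), hu.initial_eq]
  obtain rfl := hu₁.initial_eq
  obtain rfl := hu₂.initial_eq
  exact continuous_coeff_of_continuous_diffusionOp hW (hslice hu₁.continuousOn_deriv_space)
    (hslice hu₁.continuousOn_deriv_deriv_space) (hslice hu₂.continuousOn_deriv_space)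
    (hslice hu₂.continuousOn_deriv_deriv_space) (hop hu₁) (hop hu₂)

theorem IsClassicalSolution.hasDerivAt_time_const_mul_sub {t : ℝ} (S : ℝ)
    (hu : IsClassicalSolution T b σ f u) (hv : IsClassicalSolution T b' σ' f v)
    (ht : t ∈ Ico 0 T) (x : ℝ) :
    HasDerivAt (fun s ↦ S * (u s x - v s x))
      (diffusionOp (diffusionCoeff b σ) (fun y ↦ S * (u t y - v t y)) x +
        S * diffusionOp (diffusionCoeff b σ - diffusionCoeff b' σ') (v t) x) t := by
  have hderiv := ((hu.differentiableAt_time ht x).hasDerivAt.sub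
    (hv.differentiableAt_time ht x).hasDerivAt).const_mul S
  refine hderiv.congr_deriv ?_
  rw [diffusionOp_const_mul, diffusionOp_sub (.of_forall (hu.differentiable_space ht))
      (.of_forall (hv.differentiable_space ht)) (hu.differentiable_deriv_space ht x)
      (hv.differentiable_deriv_space ht x), diffusionOp_coeff_sub, hu.deriv_time_eq ht,
    hv.deriv_time_eq ht]
  ring

theorem IsClassicalSolution.isSupersolution_const_mul_sub {S τ p q : ℝ}
    (hu : IsClassicalSolution T b σ f u) (hv : IsClassicalSolution T b' σ' f v) (hτ : τ < T)
    (hsource : ∀ t ∈ Ioc 0 τ, ∀ x ∈ Ioo p q,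
      0 ≤ S * diffusionOp (diffusionCoeff b σ - diffusionCoeff b' σ') (v t) x) :
    IsSupersolution (diffusionCoeff b σ) τ p q fun t x ↦ S * (u t x - v t x) := by
  have hIcc : Icc 0 τ ⊆ Ico 0 T := Icc_subset_Ico_right hτ
  have hIoc : Ioc 0 τ ⊆ Ico 0 T := Ioc_subset_Icc_self.trans hIcc
  refine ⟨?_, fun t ht x _ ↦ ?_, fun t ht x _ ↦ ?_, fun t ht x _ ↦ ?_, fun t ht x hx ↦ ?_⟩
  · exact (continuousOn_const.mul (hu.continuousOn.sub hv.continuousOn)).mono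
      (prod_mono hIcc (subset_univ _))
  · exact (hu.hasDerivAt_time_const_mul_sub S hv (hIoc ht) x).differentiableAt
  · exact ((hu.differentiable_space (hIoc ht) x).sub
      (hv.differentiable_space (hIoc ht) x)).const_mul S
  · have hderiv : deriv (fun y ↦ S * (u t y - v t y)) =
        fun y ↦ S * (deriv (u t) y - deriv (v t) y) := by
      funext y
      simp only [deriv_const_mul_field', deriv_fun_sub (hu.differentiable_space (hIoc ht) y)
        (hv.differentiable_space (hIoc ht) y)]
    rw [hderiv]
    exact ((hu.differentiable_deriv_space (hIoc ht) x).sub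
      (hv.differentiable_deriv_space (hIoc ht) x)).const_mul S
  · rw [(hu.hasDerivAt_time_const_mul_sub S hv (hIoc ht) x).deriv]
    exact le_add_of_nonneg_right (hsource t ht x hx)

theorem IsClassicalSolution.not_lateralDataAgree {S τ p q : ℝ} (hu : IsClassicalSolution T b σ f u)
    (hv : IsClassicalSolution T b' σ' f v) (hγ : Continuous (diffusionCoeff b σ))
    (hσ : ∀ x, 0 < σ x) (hτ : τ ∈ Ioo 0 T) (hpq : p < q)
    (hsource : ∀ t ∈ Icc 0 τ, ∀ x ∈ Ioo p q,
      0 ≤ S * diffusionOp (diffusionCoeff b σ - diffusionCoeff b' σ') (v t) x)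
    (hsource_pos : 0 < S * diffusionOp (diffusionCoeff b σ - diffusionCoeff b' σ') (v 0) q) :
    ¬ LateralDataAgree u v p := by
  rintro ⟨hvalue, hderiv⟩
  have hpos : ∀ x, 0 < (diffusionCoeff b σ x).1 := fun x ↦ by
    have := hσ x
    simp only [diffusionCoeff]
    positivity
  have hinit : u 0 = v 0 := by rw [hu.initial_eq, hv.initial_eq]
  have hgrowth := hu.hasDerivAt_time_const_mul_sub S hv (left_mem_Ico.2 (hτ.1.trans hτ.2)) q
  simp only [hinit, sub_self, mul_zero, diffusionOp, deriv_const', zero_add] at hgrowth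
  have hflux := (hu.isSupersolution_const_mul_sub hv hτ.2 fun t ht ↦
      hsource t (Ioc_subset_Icc_self ht)).eventually_deriv_pos hτ.1 hpq hγ.continuousOn
    (fun x _ ↦ hpos x) (by simp [hinit]) (by filter_upwards [hvalue] with t ht; simp [ht])
    hsource_pos hgrowth.hasDerivWithinAt
  obtain ⟨t, htderiv, htflux, ht⟩ :=
    (hderiv.and_eventually (hflux.and (Ioo_mem_nhdsGT (hτ.1.trans hτ.2)))).exists
  have htT : t ∈ Ico 0 T := Ioo_subset_Ico_self ht
  have hzero := htflux _ (((hu.differentiable_space htT p).hasDerivAt.sub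
    (hv.differentiable_space htT p).hasDerivAt).const_mul S).hasDerivWithinAt
  rw [htderiv, sub_self, mul_zero] at hzero
  exact lt_irrefl 0 hzero

theorem LateralDataAgree.diffusionOp_eq_zero {g : ℝ → ℝ × ℝ} {n : ℕ} {x₀ x₁ : ℝ}
    (hdata : LateralDataAgree u v x₀) (hT : 0 < T) (hu : IsClassicalSolution T b σ f u)
    (hv : IsClassicalSolution T b' σ' f v) (hγ : Continuous (diffusionCoeff b σ))
    (hσ : ∀ x, 0 < σ x) (hx : x₀ ≤ x₁)
    (heq : ∀ x ∈ Ico x₀ x₁, diffusionCoeff b σ x = diffusionCoeff b' σ' x)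
    (hg : ContinuousAt g x₁)
    (hfactor : ∀ᶠ x in 𝓝[≥] x₁,
      (diffusionCoeff b σ - diffusionCoeff b' σ') x = (x - x₁) ^ n • g x) :
    diffusionOp g f x₁ = 0 := by
  by_contra hS
  obtain rfl := hv.initial_eq
  set S := diffusionOp g (v 0) x₁
  have hsign : ∀ᶠ z in 𝓝[≥] (0 : ℝ) ×ˢ 𝓝[≥] x₁, 0 < S * diffusionOp g (v z.1) z.2 := by
    rw [← nhdsWithin_Ico_eq_nhdsGE hT, ← nhdsWithin_prod_eq]
    exact ((continuousWithinAt_const.mul (hv.continuousWithinAt_diffusionOp hT hg)).mono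
      (prod_mono subset_rfl (subset_univ _))).eventually_const_lt (mul_self_pos.2 hS)
  have hlt : ∀ᶠ t in 𝓝[≥] (0 : ℝ), t < T := nhdsWithin_le_nhds (eventually_lt_nhds hT)
  obtain ⟨⟨τ, q⟩, ⟨hτ, hq⟩, hrect⟩ := (nhdsGE_basis_Icc.prod nhdsGE_basis_Icc).eventually_iff.1
    (hsign.and ((tendsto_fst.eventually hlt).and (tendsto_snd.eventually hfactor)))
  have hsource_eq : ∀ t ∈ Icc 0 τ, ∀ x ∈ Icc x₁ q,
      S * diffusionOp (diffusionCoeff b σ - diffusionCoeff b' σ') (v t) x =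
        (x - x₁) ^ n * (S * diffusionOp g (v t) x) := fun t ht x hx ↦ by
    rw [diffusionOp_of_coeff_eq_smul (hrect (mk_mem_prod ht hx)).2.2, mul_left_comm]
  have hτT : τ < T := (hrect (mk_mem_prod (right_mem_Icc.2 hτ.le) (left_mem_Icc.2 hq.le))).2.1
  refine hu.not_lateralDataAgree (S := S) hv hγ hσ ⟨hτ, hτT⟩ (hx.trans_lt hq)
    (fun t ht x hxq ↦ ?_) ?_ hdata
  · rcases lt_or_ge x x₁ with hlt | hge
    · rw [diffusionOp_coeff_sub, diffusionOp, diffusionOp, heq x ⟨hxq.1.le, hlt⟩, sub_self,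
        mul_zero]
    · rw [hsource_eq t ht x ⟨hge, hxq.2.le⟩]
      exact mul_nonneg (pow_nonneg (sub_nonneg.2 hge) n)
        (hrect (mk_mem_prod ht ⟨hge, hxq.2.le⟩)).1.le
  · rw [hsource_eq 0 (left_mem_Icc.2 hτ.le) q (right_mem_Icc.2 hq.le)]
    exact mul_pos (pow_pos (sub_pos.2 hq) n)
      (hrect (mk_mem_prod (left_mem_Icc.2 hτ.le) (right_mem_Icc.2 hq.le))).1

end Comparison

/-! ### Continuation of the coefficients along the line -/

section Analytic

variable {𝕜 E : Type*} [NontriviallyNormedField 𝕜] [NormedAddCommGroup E] [NormedSpace 𝕜 E]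

theorem eventually_eq_zero_or_exists_pow_smul_of_analyticWithinAt [CompleteSpace E] {ψ : 𝕜 → E}
    {s : Set 𝕜} {x : 𝕜} (hψ : AnalyticWithinAt 𝕜 ψ s x) (hx : x ∈ s) :
    (∀ᶠ y in 𝓝[s] x, ψ y = 0) ∨ ∃ (n : ℕ) (g : 𝕜 → E), AnalyticAt 𝕜 g x ∧ g x ≠ 0 ∧
      ∀ᶠ y in 𝓝[s] x, ψ y = (y - x) ^ n • g y := by
  obtain ⟨ψ', hψψ', hψ'⟩ := analyticWithinAt_iff_exists_analyticAt.1 hψ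
  rw [insert_eq_of_mem hx] at hψψ'
  by_cases hzero : ∀ᶠ y in 𝓝 x, ψ' y = 0
  · exact .inl (hψψ'.trans (nhdsWithin_le_nhds hzero))
  · obtain ⟨n, g, hg, hgx, hfactor⟩ := hψ'.exists_eventuallyEq_pow_smul_nonzero_iff.2 hzero
    exact .inr ⟨n, g, hg, hgx, hψψ'.trans (nhdsWithin_le_nhds hfactor)⟩

theorem analyticWithinAt_comp_neg {ψ : 𝕜 → E} {s t : Set 𝕜} {x : 𝕜}
    (hψ : AnalyticWithinAt 𝕜 ψ s (-x)) (hst : MapsTo Neg.neg t s) :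
    AnalyticWithinAt 𝕜 (fun y ↦ ψ (-y)) t x :=
  hψ.comp (f := Neg.neg) analyticWithinAt_id.neg hst

end Analytic

section RightUniqueness

variable {T x₀ : ℝ} {b b' σ σ' f₁ f₂ : ℝ → ℝ} {u₁ u₂ v₁ v₂ : ℝ → ℝ → ℝ}

theorem diffusionCoeff_eq_of_ge_of_lateralDataAgree (hT : 0 < T) (hσ : ∀ x, 0 < σ x)
    (hγ : ∀ x, AnalyticWithinAt ℝ (diffusionCoeff b σ) (Ici x) x)
    (hγ' : ∀ x, AnalyticWithinAt ℝ (diffusionCoeff b' σ') (Ici x) x)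
    (hW : ∀ x, deriv f₁ x * deriv (deriv f₂) x ≠ deriv f₂ x * deriv (deriv f₁) x)
    (hu₁ : IsClassicalSolution T b σ f₁ u₁) (hu₂ : IsClassicalSolution T b σ f₂ u₂)
    (hv₁ : IsClassicalSolution T b' σ' f₁ v₁) (hv₂ : IsClassicalSolution T b' σ' f₂ v₂)
    (hdata₁ : LateralDataAgree u₁ v₁ x₀) (hdata₂ : LateralDataAgree u₂ v₂ x₀) :
    ∀ x ≥ x₀, diffusionCoeff b σ x = diffusionCoeff b' σ' x := by
  have hcont : Continuous (diffusionCoeff b σ) := hu₁.continuous_diffusionCoeff hT hW hu₂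
  refine forall_ge_of_forall_eventually_nhdsGE fun x₁ hx₁ heq ↦ ?_
  rcases eventually_eq_zero_or_exists_pow_smul_of_analyticWithinAt
      ((hγ x₁).sub (hγ' x₁)) self_mem_Ici with hzero | ⟨n, g, hg, hgx₁, hfactor⟩
  · exact hzero.mono fun x hx ↦ sub_eq_zero.1 hx
  · exact absurd (coeff_eq_zero_of_diffusionOp_eq_zero (hW x₁)
      (hdata₁.diffusionOp_eq_zero hT hu₁ hv₁ hcont hσ hx₁ heq hg.continuousAt hfactor)
      (hdata₂.diffusionOp_eq_zero hT hu₂ hv₂ hcont hσ hx₁ heq hg.continuousAt hfactor)) hgx₁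

end RightUniqueness

theorem exists_and_not_succ {α : Type*} [Preorder α] [SuccOrder α] [IsSuccArchimedean α]
    {P : α → Prop} {m n : α} (hmn : m ≤ n) (hm : P m) (hn : ¬ P n) :
    ∃ j, P j ∧ ¬ P (Order.succ j) := by
  by_contra! h
  exact hn (Succ.rec hm (fun j _ ↦ h j) hmn)

namespace PiecewiseAnalytic

variable {ψ : ℝ → ℝ}

theorem analyticWithinAt_Ici (hψ : PiecewiseAnalytic ψ) (x : ℝ) :
    AnalyticWithinAt ℝ ψ (Ici x) x := by
  obtain ⟨-, κ, φ, -, -, hbot, htop, -, hφ, hψφ⟩ := hψ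
  obtain ⟨m, hm⟩ := (hbot.eventually_le_atBot x).exists
  obtain ⟨n, hn, hmn⟩ := ((htop.eventually_gt_atTop x).and (eventually_ge_atTop m)).exists
  obtain ⟨j, hjx, hxj⟩ := exists_and_not_succ (P := fun j ↦ κ j ≤ x) hmn hm hn.not_ge
  rw [not_le] at hxj
  have hmem : Ico (κ j) (κ (j + 1)) ∈ 𝓝[≥] x :=
    mem_of_superset (Ico_mem_nhdsGE hxj) (Ico_subset_Ico_left hjx)
  exact ((hφ j x ⟨hjx, hxj.le⟩).mono Ico_subset_Icc_self |>.congr (hψφ j)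
    (hψφ j x ⟨hjx, hxj⟩)).mono_of_mem_nhdsWithin hmem

theorem analyticWithinAt_Iic {x : ℝ} (hψ : PiecewiseAnalytic ψ) (hx : ContinuousAt ψ x) :
    AnalyticWithinAt ℝ ψ (Iic x) x := by
  obtain ⟨-, κ, φ, -, -, hbot, htop, -, hφ, hψφ⟩ := hψ
  obtain ⟨m, hm⟩ := (hbot.eventually_lt_atBot x).exists
  obtain ⟨n, hn, hmn⟩ := ((htop.eventually_ge_atTop x).and (eventually_ge_atTop m)).exists
  obtain ⟨j, hjx, hxj⟩ := exists_and_not_succ (P := fun j ↦ κ j < x) hmn hm hn.not_gt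
  rw [not_lt] at hxj
  have hφx : AnalyticWithinAt ℝ (φ j) (Iic x) x :=
    (hφ j x ⟨hjx.le, hxj⟩).mono_of_mem_nhdsWithin <|
      mem_of_superset (Icc_mem_nhdsLE hjx) (Icc_subset_Icc_right hxj)
  have hlt : ψ =ᶠ[𝓝[<] x] φ j := by
    filter_upwards [Ico_mem_nhdsLT hjx] with y hy using hψφ j y ⟨hy.1, hy.2.trans_le hxj⟩
  have heq : ψ x = φ j x := tendsto_nhds_unique_of_eventuallyEq
    hx.continuousWithinAt.tendsto (hφx.continuousWithinAt.mono Iio_subset_Iic_self).tendsto hlt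
  refine hφx.congr_of_eventuallyEq ?_ heq
  rw [← Iio_insert, nhdsWithin_insert]
  exact eventually_sup.2 ⟨heq, hlt⟩

end PiecewiseAnalytic

section Reflection

variable {T x₀ : ℝ} {b σ f : ℝ → ℝ} {u v : ℝ → ℝ → ℝ}

theorem deriv_comp_neg_eq (φ : ℝ → ℝ) : deriv (fun y ↦ φ (-y)) = fun y ↦ -deriv φ (-y) :=
  funext fun _ ↦ deriv_comp_neg φ _

theorem deriv_deriv_comp_neg (φ : ℝ → ℝ) :
    deriv (deriv fun y ↦ φ (-y)) = fun y ↦ deriv (deriv φ) (-y) := by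
  rw [deriv_comp_neg_eq, deriv.fun_neg', deriv_comp_neg_eq]
  simp only [neg_neg]

theorem IsClassicalSolution.reflect (hu : IsClassicalSolution T b σ f u) :
    IsClassicalSolution T (fun x ↦ -b (-x)) (fun x ↦ σ (-x)) (fun x ↦ f (-x))
      fun t x ↦ u t (-x) := by
  have hcomp : ∀ {F : ℝ × ℝ → ℝ}, ContinuousOn F (Ico 0 T ×ˢ univ) →
      ContinuousOn (fun z : ℝ × ℝ ↦ F (z.1, -z.2)) (Ico 0 T ×ˢ univ) := fun hF ↦
    hF.comp (by fun_prop) fun z hz ↦ ⟨hz.1, mem_univ _⟩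
  refine ⟨hcomp hu.continuousOn, fun t ht x ↦ hu.differentiableAt_time ht (-x),
    fun t ht x ↦ differentiableAt_comp_neg.2 (hu.differentiable_space ht (-x)), fun t ht x ↦ ?_,
    hcomp hu.continuousOn_deriv_time, ?_, ?_, fun t ht x ↦ ?_,
    fun x ↦ congrFun hu.initial_eq (-x)⟩
  · rw [deriv_comp_neg_eq]
    exact (differentiableAt_comp_neg.2 (hu.differentiable_deriv_space ht (-x))).neg
  · simp only [deriv_comp_neg_eq]
    exact (hcomp hu.continuousOn_deriv_space).neg
  · simp only [deriv_deriv_comp_neg]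
    exact hcomp hu.continuousOn_deriv_deriv_space
  · rw [hu.deriv_time_eq ht, deriv_deriv_comp_neg, deriv_comp_neg_eq]
    simp only [diffusionOp, diffusionCoeff, neg_mul_neg]

theorem LateralDataAgree.reflect (h : LateralDataAgree u v x₀) :
    LateralDataAgree (fun t x ↦ u t (-x)) (fun t x ↦ v t (-x)) (-x₀) := by
  refine ⟨by simpa only [neg_neg] using h.1, ?_⟩
  simpa only [deriv_comp_neg_eq, neg_neg, neg_inj] using h.2

theorem analyticWithinAt_diffusionCoeff_reflect {x : ℝ} (hb : PiecewiseAnalytic b)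
    (hσ : PiecewiseAnalytic σ) (hb_cont : Continuous b) (hσ_cont : Continuous σ) :
    AnalyticWithinAt ℝ (diffusionCoeff (fun x ↦ -b (-x)) fun x ↦ σ (-x)) (Ici x) x := by
  have hmaps : MapsTo Neg.neg (Ici x) (Iic (-x)) := fun _ hy ↦ neg_le_neg (mem_Ici.1 hy)
  exact analyticWithinAt_diffusionCoeff
    (analyticWithinAt_comp_neg (hb.analyticWithinAt_Iic hb_cont.continuousAt) hmaps).neg
    (analyticWithinAt_comp_neg (hσ.analyticWithinAt_Iic hσ_cont.continuousAt) hmaps)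

end Reflection

theorem diffusionCoeff_eq_of_le_of_lateralDataAgree {T x₀ : ℝ} {b b' σ σ' f₁ f₂ : ℝ → ℝ}
    {u₁ u₂ v₁ v₂ : ℝ → ℝ → ℝ} (hT : 0 < T) (hb : PiecewiseAnalytic b)
    (hb' : PiecewiseAnalytic b') (hσ : PiecewiseAnalytic σ) (hσ' : PiecewiseAnalytic σ')
    (hσ_pos : ∀ x, 0 < σ x) (hσ'_nonneg : ∀ x, 0 ≤ σ' x)
    (hW : ∀ x, deriv f₁ x * deriv (deriv f₂) x ≠ deriv f₂ x * deriv (deriv f₁) x)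
    (hu₁ : IsClassicalSolution T b σ f₁ u₁) (hu₂ : IsClassicalSolution T b σ f₂ u₂)
    (hv₁ : IsClassicalSolution T b' σ' f₁ v₁) (hv₂ : IsClassicalSolution T b' σ' f₂ v₂)
    (hdata₁ : LateralDataAgree u₁ v₁ x₀) (hdata₂ : LateralDataAgree u₂ v₂ x₀) :
    ∀ x ≤ x₀, diffusionCoeff b σ x = diffusionCoeff b' σ' x := by
  intro x hx
  obtain ⟨hb_cont, hσ_cont⟩ := continuous_of_continuous_diffusionCoeff (fun y ↦ (hσ_pos y).le)
    (hu₁.continuous_diffusionCoeff hT hW hu₂)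
  obtain ⟨hb'_cont, hσ'_cont⟩ := continuous_of_continuous_diffusionCoeff hσ'_nonneg
    (hv₁.continuous_diffusionCoeff hT hW hv₂)
  have hreflect := diffusionCoeff_eq_of_ge_of_lateralDataAgree hT (fun y ↦ hσ_pos (-y))
    (fun _ ↦ analyticWithinAt_diffusionCoeff_reflect hb hσ hb_cont hσ_cont)
    (fun _ ↦ analyticWithinAt_diffusionCoeff_reflect hb' hσ' hb'_cont hσ'_cont)
    (fun y ↦ by simpa [deriv_comp_neg_eq, deriv_deriv_comp_neg] using hW (-y))
    hu₁.reflect hu₂.reflect hv₁.reflect hv₂.reflect hdata₁.reflect hdata₂.reflect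
    (-x) (neg_le_neg hx)
  simpa [diffusionCoeff] using hreflect

theorem drift_diffusion_uniqueness_pointwise_general {T x₀ : ℝ} {b b' σ σ' f₁ f₂ : ℝ → ℝ}
    {u₁ u₂ v₁ v₂ : ℝ → ℝ → ℝ} (hT : 0 < T) (hb : PiecewiseAnalytic b)
    (hb' : PiecewiseAnalytic b') (hσ : PiecewiseAnalytic σ) (hσ' : PiecewiseAnalytic σ')
    (hσ_pos : ∀ x, 0 < σ x) (hσ'_nonneg : ∀ x, 0 ≤ σ' x)
    (hW : ∀ x, deriv f₁ x * deriv (deriv f₂) x ≠ deriv f₂ x * deriv (deriv f₁) x)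
    (hu₁ : IsClassicalSolution T b σ f₁ u₁) (hu₂ : IsClassicalSolution T b σ f₂ u₂)
    (hv₁ : IsClassicalSolution T b' σ' f₁ v₁) (hv₂ : IsClassicalSolution T b' σ' f₂ v₂)
    (hdata₁ : LateralDataAgree u₁ v₁ x₀) (hdata₂ : LateralDataAgree u₂ v₂ x₀) (x : ℝ) :
    b x = b' x ∧ σ x = σ' x := by
  rcases le_total x₀ x with hx | hx
  · exact eq_of_diffusionCoeff_eq (hσ_pos x).le (hσ'_nonneg x) <|
      diffusionCoeff_eq_of_ge_of_lateralDataAgree hT hσ_pos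
        (fun x ↦ analyticWithinAt_diffusionCoeff (hb.analyticWithinAt_Ici x)
          (hσ.analyticWithinAt_Ici x))
        (fun x ↦ analyticWithinAt_diffusionCoeff (hb'.analyticWithinAt_Ici x)
          (hσ'.analyticWithinAt_Ici x)) hW hu₁ hu₂ hv₁ hv₂ hdata₁ hdata₂ x hx
  · exact eq_of_diffusionCoeff_eq (hσ_pos x).le (hσ'_nonneg x) <|
      diffusionCoeff_eq_of_le_of_lateralDataAgree hT hb hb' hσ hσ' hσ_pos hσ'_nonneg hW
        hu₁ hu₂ hv₁ hv₂ hdata₁ hdata₂ x hx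

/-- Pointwise-observation variant of Theorem 3: both coefficients are uniquely
determined by the values and first spatial derivatives of the first and second
moments at a single point, for small times. -/
theorem drift_diffusion_uniqueness_pointwise
    (T : ℝ) (hT : 0 < T)
    (b bt sigma sigmat : ℝ → ℝ)
    (hb : ClassM b) (hbt : ClassM bt)
    (hs : ClassM sigma) (hst : ClassM sigmat)
    (hspos : ∀ x, 0 < sigma x) (hstpos : ∀ x, 0 < sigmat x)
    (u₁ u₂ ut₁ ut₂ : ℝ → ℝ → ℝ)
    (hu₁ : IsClassicalSolution T b sigma (fun x => x ^ 1) u₁)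
    (hu₂ : IsClassicalSolution T b sigma (fun x => x ^ 2) u₂)
    (hut₁ : IsClassicalSolution T bt sigmat (fun x => x ^ 1) ut₁)
    (hut₂ : IsClassicalSolution T bt sigmat (fun x => x ^ 2) ut₂)
    (ε : ℝ) (hε : ε ∈ Ioo 0 T) (x₀ : ℝ)
    (hobs₁ : ∀ t ∈ Ioo 0 ε, u₁ t x₀ = ut₁ t x₀)
    (hobs₂ : ∀ t ∈ Ioo 0 ε, u₂ t x₀ = ut₂ t x₀)
    (hobsd₁ : ∀ t ∈ Ioo 0 ε,
      deriv (fun y => u₁ t y) x₀ = deriv (fun y => ut₁ t y) x₀)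
    (hobsd₂ : ∀ t ∈ Ioo 0 ε,
      deriv (fun y => u₂ t y) x₀ = deriv (fun y => ut₂ t y) x₀) :
    ∀ x : ℝ, b x = bt x ∧ sigma x = sigmat x := by
  have hsq : deriv (fun x : ℝ ↦ x ^ 2) = fun x ↦ 2 * x := funext fun x ↦ by simp
  have hW : ∀ x : ℝ, deriv (fun x : ℝ ↦ x ^ 1) x * deriv (deriv fun x : ℝ ↦ x ^ 2) x ≠
      deriv (fun x : ℝ ↦ x ^ 2) x * deriv (deriv fun x : ℝ ↦ x ^ 1) x := by
    simp [hsq]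
  exact drift_diffusion_uniqueness_pointwise_general hT hb.2 hbt.2 hs.2 hst.2 hspos
    (fun x ↦ (hstpos x).le) hW hu₁ hu₂ hut₁ hut₂ (.of_forall_Ioo hε.1 hobs₁ hobsd₁)
    (.of_forall_Ioo hε.1 hobs₂ hobsd₂)
end

section
/- Let ψ : ℝ → ℝ be piecewise analytic, and let a < b be real numbers such that ψ(x) = 0 for all x ∈ [a, b]. Then there exists δ > 0 such that ψ has a constant sign on [a, b + δ], i.e., either ψ(x) ≥ 0 for all x ∈ [a, b + δ] or ψ(x) ≤ 0 for all x ∈ [a, b + δ]. Consequently, for a piecewise analytic ψ and a point x₀, if the supremum x₁ = sup{x > x₀ : ψ has a constant sign on [x₀, x]} is attained with ψ ≡ 0 on [x₀, x₁], then x₁ = +∞. -/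
open Set Filter

/-- `ψ` has a constant sign on `s`: it is nonnegative on all of `s` or nonpositive on
all of `s`. -/
def ConstSignOn (ψ : ℝ → ℝ) (s : Set ℝ) : Prop :=
  (∀ x ∈ s, 0 ≤ ψ x) ∨ (∀ x ∈ s, ψ x ≤ 0)

/-!
At every point `b`, a piecewise analytic function coincides on some `[b, b + ε)` with a function
`g` analytic at `b`. Either `g` vanishes near `b`, or `g y = (y - b) ^ n * h y` with `h` continuous
and `h b ≠ 0`, so `g` has the sign of `h b` just to the right of `b`. An interval on which the
function vanishes does not obstruct either sign, so the constant sign found to the right of `b`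
extends over all of `[a, b + δ]`.
-/

open scoped Topology

theorem eventually_nonneg_or_nonpos_nhdsGE_of_analyticAt {g : ℝ → ℝ} {b : ℝ}
    (hg : AnalyticAt ℝ g b) : (∀ᶠ y in 𝓝[≥] b, 0 ≤ g y) ∨ ∀ᶠ y in 𝓝[≥] b, g y ≤ 0 := by
  by_cases hzero : ∀ᶠ y in 𝓝 b, g y = 0
  · exact .inl ((hzero.filter_mono nhdsWithin_le_nhds).mono fun _ hy ↦ hy.ge)
  obtain ⟨n, h, hh, hhb, hgh⟩ := hg.exists_eventuallyEq_pow_smul_nonzero_iff.2 hzero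
  have hfactor : ∀ᶠ y in 𝓝[≥] b, g y = (y - b) ^ n * h y := hgh.filter_mono nhdsWithin_le_nhds
  have hpow : ∀ᶠ y in 𝓝[≥] b, 0 ≤ (y - b) ^ n :=
    eventually_mem_nhdsWithin.mono fun _ hy ↦ pow_nonneg (sub_nonneg.2 hy) n
  have hcont : Tendsto h (𝓝[≥] b) (𝓝 (h b)) := hh.continuousAt.continuousWithinAt
  rcases hhb.lt_or_gt with hneg | hpos
  · right
    filter_upwards [hfactor, hpow, hcont.eventually_lt_const hneg] with y hgy hpy hhy
    exact hgy ▸ mul_nonpos_of_nonneg_of_nonpos hpy hhy.le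
  · left
    filter_upwards [hfactor, hpow, hcont.eventually_const_lt hpos] with y hgy hpy hhy
    exact hgy ▸ mul_nonneg hpy hhy.le

theorem exists_gt_constSignOn_Icc_of_analyticWithinAt {f : ℝ → ℝ} {b : ℝ}
    (hf : AnalyticWithinAt ℝ f (Ici b) b) : ∃ c > b, ConstSignOn f (Icc b c) := by
  obtain ⟨g, -, hfg, hg⟩ := hf.exists_analyticAt
  have hfgIcc (c : ℝ) : EqOn f g (Icc b c) := fun y hy ↦ hfg (.inr hy.1)
  rcases eventually_nonneg_or_nonpos_nhdsGE_of_analyticAt hg with hsign | hsign <;>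
    obtain ⟨c, hbc, hc⟩ := mem_nhdsGE_iff_exists_Icc_subset.1 hsign
  · exact ⟨c, hbc, .inl fun y hy ↦ (hc hy).trans_eq (hfgIcc c hy).symm⟩
  · exact ⟨c, hbc, .inr fun y hy ↦ (hfgIcc c hy).trans_le (hc hy)⟩

theorem ConstSignOn.mono {f : ℝ → ℝ} {s t : Set ℝ} (hf : ConstSignOn f t) (hst : s ⊆ t) :
    ConstSignOn f s :=
  hf.imp (fun h x hx ↦ h x (hst hx)) fun h x hx ↦ h x (hst hx)

theorem ConstSignOn.union_of_eqOn_zero {f : ℝ → ℝ} {s t : Set ℝ} (hf : ConstSignOn f t)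
    (hs : EqOn f 0 s) : ConstSignOn f (s ∪ t) :=
  hf.imp (fun h x hx ↦ hx.elim (fun hxs ↦ (hs hxs).ge) (h x))
    fun h x hx ↦ hx.elim (fun hxs ↦ (hs hxs).le) (h x)

theorem exists_gt_constSignOn_Icc_of_eqOn_zero {f : ℝ → ℝ} {a b : ℝ}
    (hf : AnalyticWithinAt ℝ f (Ici b) b) (hzero : EqOn f 0 (Icc a b)) :
    ∃ c > b, ConstSignOn f (Icc a c) := by
  obtain ⟨c, hbc, hc⟩ := exists_gt_constSignOn_Icc_of_analyticWithinAt hf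
  exact ⟨c, hbc, (hc.union_of_eqOn_zero hzero).mono Icc_subset_Icc_union_Icc⟩

theorem exists_mem_Ico_map_succ {ι α : Type*} [LinearOrder ι] [SuccOrder ι] [IsSuccArchimedean ι]
    [LinearOrder α] [NoMaxOrder α] {f : ι → α} (hf : Tendsto f atTop atTop) {i : ι} {b : α}
    (hi : f i ≤ b) : ∃ j, b ∈ Ico (f j) (f (Order.succ j)) := by
  by_contra! hb
  have hle (j : ι) (hij : i ≤ j) : f j ≤ b :=
    Succ.rec hi (fun k _ hk ↦ not_lt.1 fun hlt ↦ hb k ⟨hk, hlt⟩) hij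
  have : Nonempty ι := ⟨i⟩
  obtain ⟨j, hbj, hij⟩ := ((hf.eventually_gt_atTop b).and (eventually_ge_atTop i)).exists
  exact (hle j hij).not_gt hbj

theorem PiecewiseAnalytic.analyticWithinAt_Ici_s7 {ψ : ℝ → ℝ} (hψ : PiecewiseAnalytic ψ) (b : ℝ) :
    AnalyticWithinAt ℝ ψ (Ici b) b := by
  obtain ⟨-, κ, φ, -, -, hbot, htop, -, hφ, hψφ⟩ := hψ
  obtain ⟨i, hi⟩ := (hbot.eventually_le_atBot b).exists
  obtain ⟨j, hj⟩ := exists_mem_Ico_map_succ htop hi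
  have hIco : Ico (κ j) (κ (j + 1)) ∈ 𝓝[≥] b := Ico_mem_nhdsGE_of_mem hj
  have hφb : AnalyticWithinAt ℝ (φ j) (Ici b) b :=
    (hφ j b (Ico_subset_Icc_self hj)).mono_of_mem_nhdsWithin
      (mem_of_superset hIco Ico_subset_Icc_self)
  exact hφb.congr_of_eventuallyEq (eventually_of_mem hIco (hψφ j)) (hψφ j b hj)

theorem piecewiseAnalytic_constant_sign_extension_general {ψ : ℝ → ℝ}
    (hψ : ∀ b, AnalyticWithinAt ℝ ψ (Ici b) b) :
    (∀ a b : ℝ, (∀ x ∈ Icc a b, ψ x = 0) → ∃ δ > 0, ConstSignOn ψ (Icc a (b + δ))) ∧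
    (∀ x₀ x₁ : ℝ, x₀ ≤ x₁ → (∀ x ∈ Icc x₀ x₁, ψ x = 0) →
      ¬ IsLUB {x : ℝ | x₀ < x ∧ ConstSignOn ψ (Icc x₀ x)} x₁) := by
  refine ⟨fun a b hzero ↦ ?_, fun x₀ x₁ hx hzero hlub ↦ ?_⟩
  · obtain ⟨c, hbc, hc⟩ := exists_gt_constSignOn_Icc_of_eqOn_zero (hψ b) hzero
    exact ⟨c - b, sub_pos.2 hbc, by rwa [add_sub_cancel]⟩
  · obtain ⟨c, hx₁c, hc⟩ := exists_gt_constSignOn_Icc_of_eqOn_zero (hψ x₁) hzero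
    exact (hlub.1 ⟨hx.trans_lt hx₁c, hc⟩).not_gt hx₁c

/-- If a piecewise analytic function vanishes on `[a, b]` (with `a < b`), then it keeps
a constant sign on `[a, b + δ]` for some `δ > 0`.  Consequently, if
`x₁ = sup {x > x₀ : ψ has a constant sign on [x₀, x]}` were a (finite) real number with
`ψ ≡ 0` on `[x₀, x₁]`, a contradiction would follow; i.e. the supremum is `+∞`. -/
theorem piecewiseAnalytic_constant_sign_extension
    (ψ : ℝ → ℝ) (hψ : PiecewiseAnalytic ψ) :
    (∀ a b : ℝ, a < b → (∀ x ∈ Icc a b, ψ x = 0) →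
      ∃ δ > 0, ConstSignOn ψ (Icc a (b + δ))) ∧
    (∀ x₀ x₁ : ℝ, x₀ < x₁ → (∀ x ∈ Icc x₀ x₁, ψ x = 0) →
      IsLUB {x : ℝ | x₀ < x ∧ ConstSignOn ψ (Icc x₀ x)} x₁ → False) := by
  obtain ⟨hext, hsup⟩ :=
    piecewiseAnalytic_constant_sign_extension_general hψ.analyticWithinAt_Ici_s7
  exact ⟨fun a b _ ↦ hext a b, fun x₀ x₁ hx ↦ hsup x₀ x₁ hx.le⟩
end
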